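/- If (γ_k)_{k=0}^∞ is a nontrivial Legendre multiplier sequence all of whose terms are non-negative, then the sequence is non-decreasing: γ_k ≤ γ_{k+1} for all k ≥ 0. -/

import Mathlib

open Polynomial

/-- A real polynomial is *hyperbolic* if all of its complex roots are real
(the zero polynomial and nonzero constants are vacuously hyperbolic). -/
def Hyperbolic (p : Polynomial ℝ) : Prop :=
  ∀ z ∈ (p.map (algebraMap ℝ ℂ)).roots, z.im = 0

/-- `γ` is a multiplier sequence for the simple set `q`: the linear operator
sending `q k` to `γ k • q k` maps hyperbolic polynomials to hyperbolic
polynomials.  (Since `q` is a simple set, every real polynomial has a unique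
expansion `∑ a k • q k`, so this quantification over coefficient families
expresses exactly that property.) -/
def IsMultiplierSeqFor (q : ℕ → Polynomial ℝ) (γ : ℕ → ℝ) : Prop :=
  ∀ (n : ℕ) (a : ℕ → ℝ),
    Hyperbolic (∑ k ∈ Finset.range n, C (a k) * q k) →
    Hyperbolic (∑ k ∈ Finset.range n, C (γ k * a k) * q k)

/-- The Legendre polynomials, via Rodrigues' formula
`Le n = (1/(2^n n!)) Dⁿ[(x²-1)ⁿ]`. -/
noncomputable def legendre (n : ℕ) : Polynomial ℝ :=
  C (1 / (2 ^ n * n.factorial : ℝ)) * derivative^[n] ((X ^ 2 - 1) ^ n)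

/-- A Legendre multiplier sequence. -/
def IsLegendreMS (γ : ℕ → ℝ) : Prop := IsMultiplierSeqFor legendre γ

/-- A sequence is a *trivial* (Legendre multiplier) sequence if it is constant
or all of its nonzero terms occur in at most two consecutive positions. -/
def IsTrivialSeq (γ : ℕ → ℝ) : Prop :=
  (∃ c : ℝ, ∀ k, γ k = c) ∨ (∃ n : ℕ, ∀ k, k ≠ n → k ≠ n + 1 → γ k = 0)

/-!
Rescaling `x ↦ t x` and letting `t → 0` shows that a multiplier sequence `γ` for a simple set is
also one for the monomials. Hence `γ` is log-concave, and if it is nonnegative, its support is an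
interval.

Legendre polynomials satisfy a symmetric three-term recurrence with positive coefficients, so on the
imaginary axis they are, up to a power of `i`, positive real functions. If `α q (n + 2) + β q n` is
real-rooted and `α > 0`, its modulus does not decrease as one moves up the imaginary axis; hence the
first term, which dominates far out, dominates the second one all along the axis. Applied to the
image of `x q (2k + 1)`, this gives `γ (2k) ≤ γ (2k + 2)` when the latter is positive; applied to
the image of `(x² - c) q (m + 2)`, it shows that a support not contained in two consecutive indices
never ends. A drop `γ (k + 1) < γ k` would then persist forever by log-concavity, contradicting the
first inequality.
-/

open Filter Topology ComplexConjugate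

theorem hyperbolic_iff_splits {p : ℝ[X]} : Hyperbolic p ↔ p.Splits := by
  constructor
  · exact fun h => .of_splits_map _ (IsAlgClosed.splits _) fun z hz =>
      ⟨z.re, Complex.ext rfl (h z hz).symm⟩
  · intro h z hz
    rw [h.roots_map] at hz
    obtain ⟨x, -, rfl⟩ := Multiset.mem_map.1 hz
    exact Complex.ofReal_im x

theorem splits_of_forall_aeval_ne_zero {p : ℝ[X]} (hp : ∀ z : ℂ, z.im ≠ 0 → aeval z p ≠ 0) :
    p.Splits :=
  hyperbolic_iff_splits.1 fun z hz => not_imp_not.1 (hp z) <|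
    (eval_map_algebraMap _ _).symm.trans (isRoot_of_mem_roots hz)

theorem norm_aeval_le_of_splits {p : ℝ[X]} (hp : p.Splits) {w z : ℂ} (hre : w.re = z.re)
    (him : |w.im| ≤ |z.im|) : ‖aeval w p‖ ≤ ‖aeval z p‖ := by
  induction hp using Submonoid.closure_induction with
  | mem f hf =>
    rcases hf with ⟨c, rfl⟩ | ⟨c, rfl⟩
    · simp only [aeval_C, le_refl]
    · have hsq : (w.re + c) ^ 2 + w.im ^ 2 ≤ (z.re + c) ^ 2 + z.im ^ 2 :=
        add_le_add (by rw [hre]) (sq_le_sq.2 him)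
      simpa [Complex.norm_eq_sqrt_sq_add_sq] using Real.sqrt_le_sqrt hsq
  | one => simp only [map_one, le_refl]
  | mul f g _ _ hf hg =>
    simp only [map_mul, norm_mul]
    gcongr

/-- The inequality `norm_aeval_le_of_splits` replaces Hurwitz's theorem: it passes to the limit, and
there a nonreal zero would force vanishing on a whole vertical segment. -/
theorem splits_of_tendsto_aeval {ι : Type*} {l : Filter ι} [l.NeBot] {P : ι → ℝ[X]} {p : ℝ[X]}
    (hP : ∀ i, (P i).Splits)
    (hlim : ∀ z : ℂ, Tendsto (fun i => aeval z (P i)) l (𝓝 (aeval z p))) : p.Splits := by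
  rcases eq_or_ne p 0 with rfl | hp
  · exact .zero
  refine splits_of_forall_aeval_ne_zero fun z hz hroot => hp ?_
  have vanish : ∀ y ∈ Set.Icc 0 |z.im|, aeval (⟨z.re, y⟩ : ℂ) p = 0 := fun y hy => by
    have hle : ‖aeval (⟨z.re, y⟩ : ℂ) p‖ ≤ ‖aeval z p‖ :=
      le_of_tendsto_of_tendsto' (hlim _).norm (hlim z).norm fun i =>
        norm_aeval_le_of_splits (hP i) rfl ((abs_of_nonneg hy.1).trans_le hy.2)
    rwa [hroot, norm_zero, norm_le_zero_iff] at hle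
  have injective : Function.Injective fun y : ℝ => (⟨z.re, y⟩ : ℂ) := fun _ _ h =>
    congrArg Complex.im h
  rw [← Polynomial.map_eq_zero (algebraMap ℝ ℂ)]
  refine eq_zero_of_infinite_isRoot _ <|
    ((Set.Icc_infinite (abs_pos.2 hz)).image injective.injOn).mono ?_
  rintro _ ⟨y, hy, rfl⟩
  exact (eval_map_algebraMap _ _).trans (vanish y hy)

section DiagonalMap

variable {K : Type*} [Field K] (S : Polynomial.Sequence K) (γ : ℕ → K)

/-- The basis of `K[X]` formed by the members of the simple set `S`. -/
noncomputable def simpleSetBasis : Module.Basis ℕ K K[X] :=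
  S.basis fun k => (leadingCoeff_ne_zero.2 (S.ne_zero k)).isUnit

theorem simpleSetBasis_apply (k : ℕ) : simpleSetBasis S k = S k := S.basis_eq_self _ k

/-- The linear operator which multiplies the `k`-th member of the simple set `S` by `γ k`. -/
noncomputable def diagonalMap : K[X] →ₗ[K] K[X] :=
  (simpleSetBasis S).constr K fun k => γ k • S k

theorem diagonalMap_apply (k : ℕ) : diagonalMap S γ (S k) = γ k • S k := by
  conv_lhs => rw [← simpleSetBasis_apply, diagonalMap, Module.Basis.constr_basis]

theorem degree_diagonalMap_sub_smul_lt {p : K[X]} {n : ℕ} (hp : p.degree ≤ n) :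
    (diagonalMap S γ p - γ n • p).degree < n := by
  let R : K[X] →ₗ[K] K[X] := diagonalMap S γ - γ n • LinearMap.id
  have hle : degreeLE K n ≤ (degreeLT K n).comap R := by
    rw [← S.span_degreeLE fun k _ => (leadingCoeff_ne_zero.2 (S.ne_zero k)).isUnit,
      Submodule.span_le]
    rintro _ ⟨k, hk, rfl⟩
    have hdiag : R (S k) = (γ k - γ n) • S k := by
      rw [sub_smul, ← diagonalMap_apply]
      rfl
    rw [SetLike.mem_coe, Submodule.mem_comap, hdiag]
    rcases (Set.mem_Iic.1 hk).eq_or_lt with rfl | hlt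
    · rw [sub_self, zero_smul]
      exact zero_mem _
    · exact Submodule.smul_mem _ _ (mem_degreeLT.2 (by rw [S.degree_eq]; exact_mod_cast hlt))
  exact mem_degreeLT.1 (hle (mem_degreeLE.2 hp))

theorem natDegree_diagonalMap_X_pow_le (k : ℕ) : (diagonalMap S γ (X ^ k)).natDegree ≤ k := by
  have hlt := degree_diagonalMap_sub_smul_lt S γ (degree_X_pow_le (R := K) k)
  rw [natDegree_le_iff_degree_le, ← sub_add_cancel (diagonalMap S γ (X ^ k)) (γ k • X ^ k)]
  exact (degree_add_le _ _).trans
    (max_le hlt.le ((degree_smul_le _ _).trans (degree_X_pow_le k)))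

theorem coeff_diagonalMap_X_pow (k : ℕ) : (diagonalMap S γ (X ^ k)).coeff k = γ k := by
  have hlt := degree_diagonalMap_sub_smul_lt S γ (degree_X_pow_le (R := K) k)
  simpa [sub_eq_zero] using coeff_eq_zero_of_degree_lt hlt

end DiagonalMap

theorem IsMultiplierSeqFor.splits_diagonalMap {S : Polynomial.Sequence ℝ} {γ : ℕ → ℝ}
    (h : IsMultiplierSeqFor S γ) {p : ℝ[X]} (hp : p.Splits) : (diagonalMap S γ p).Splits := by
  let B := simpleSetBasis S
  obtain ⟨n, hn⟩ := (B.repr p).support.exists_nat_subset_range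
  have expansion : p = ∑ k ∈ Finset.range n, C (B.repr p k) * S k := by
    conv_lhs => rw [← B.linearCombination_repr p, Finsupp.linearCombination_apply,
      Finsupp.sum_of_support_subset _ hn _ (by simp only [zero_smul, implies_true])]
    simp only [B, simpleSetBasis_apply, smul_eq_C_mul]
  have image : diagonalMap S γ p = ∑ k ∈ Finset.range n, C (γ k * B.repr p k) * S k := by
    conv_lhs => rw [expansion, map_sum]
    refine Finset.sum_congr rfl fun k _ => ?_
    rw [← smul_eq_C_mul, map_smul, diagonalMap_apply, smul_smul, mul_comm, smul_eq_C_mul]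
  rw [← hyperbolic_iff_splits] at hp ⊢
  rw [image]
  exact h n _ (expansion ▸ hp)

theorem tendsto_pow_mul_aeval_div {q : ℝ[X]} {k : ℕ} (hq : q.natDegree ≤ k) (z : ℂ) :
    Tendsto (fun t : ℝ => (t : ℂ) ^ k * aeval (z / t) q) (𝓝[≠] 0) (𝓝 (q.coeff k * z ^ k)) := by
  let f (t : ℝ) : ℂ := ∑ i ∈ Finset.range (k + 1), q.coeff i * z ^ i * (t : ℂ) ^ (k - i)
  have hf : Continuous f := by fun_prop
  have hf₀ : f 0 = q.coeff k * z ^ k := by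
    have lower_terms : ∀ i ∈ Finset.range k, (q.coeff i : ℂ) * z ^ i * (0 : ℂ) ^ (k - i) = 0 :=
      fun i hi => by
        rw [zero_pow (Nat.sub_ne_zero_of_lt (Finset.mem_range.1 hi)), mul_zero]
    simp only [f, Complex.ofReal_zero, Finset.sum_range_succ, Finset.sum_eq_zero lower_terms,
      tsub_self, pow_zero, mul_one, zero_add]
  rw [← hf₀]
  refine (hf.continuousWithinAt (s := {0}ᶜ)).congr' ?_
  filter_upwards [self_mem_nhdsWithin] with t ht
  have ht : (t : ℂ) ≠ 0 := Complex.ofReal_ne_zero.2 ht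
  rw [aeval_eq_sum_range' (Nat.lt_succ_of_le hq), Finset.mul_sum]
  refine Finset.sum_congr rfl fun i hi => ?_
  rw [pow_sub₀ _ ht (Nat.le_of_lt_succ (Finset.mem_range.1 hi)), div_pow, Complex.real_smul]
  ring

/-- Rescale `x ↦ t x`, apply the operator, rescale back and let `t → 0`: only the leading terms of
the images of the monomials survive. -/
theorem IsMultiplierSeqFor.X_pow {S : Polynomial.Sequence ℝ} {γ : ℕ → ℝ}
    (h : IsMultiplierSeqFor S γ) : IsMultiplierSeqFor (fun k => X ^ k) γ := by
  intro n a hp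
  rw [hyperbolic_iff_splits] at hp ⊢
  set p : ℝ[X] := ∑ k ∈ Finset.range n, C (a k) * X ^ k with hp_def
  have linear (c : ℝ) : (C c * X : ℝ[X]).natDegree ≤ 1 :=
    (natDegree_C_mul_le _ _).trans natDegree_X_le
  refine splits_of_tendsto_aeval (l := 𝓝[≠] (0 : ℝ))
    (P := fun t => (diagonalMap S γ (p.comp (C t * X))).comp (C t⁻¹ * X))
    (fun t => (h.splits_diagonalMap (hp.comp_of_natDegree_le_one (linear t)))
      |>.comp_of_natDegree_le_one (linear t⁻¹)) fun z => ?_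
  have rescaled (t : ℝ) : aeval z ((diagonalMap S γ (p.comp (C t * X))).comp (C t⁻¹ * X)) =
      ∑ k ∈ Finset.range n,
        (a k : ℂ) * ((t : ℂ) ^ k * aeval (z / t) (diagonalMap S γ (X ^ k))) := by
    have himage : diagonalMap S γ (p.comp (C t * X)) =
        ∑ k ∈ Finset.range n, (a k * t ^ k) • diagonalMap S γ (X ^ k) := by
      simp only [hp_def, ← map_smul, ← map_sum, ← coe_compRingHom_apply]
      simp only [map_sum, coe_compRingHom, C_comp, X_comp, mul_pow, smul_eq_C_mul, map_mul,
        map_pow, mul_assoc]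
    simp only [himage, aeval_comp, map_sum, map_smul]
    simp [div_eq_inv_mul, mul_assoc]
  have limit : aeval z (∑ k ∈ Finset.range n, C (γ k * a k) * X ^ k : ℝ[X]) =
      ∑ k ∈ Finset.range n, (a k : ℂ) * (γ k * z ^ k) := by
    simp [mul_assoc, mul_left_comm]
  simp only [rescaled, limit]
  refine tendsto_finsetSum _ fun k _ => Tendsto.const_mul _ ?_
  simpa only [coeff_diagonalMap_X_pow] using
    tendsto_pow_mul_aeval_div (natDegree_diagonalMap_X_pow_le S γ k) z

/-! ### Multiplier sequences for the monomials -/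

section ReciprocalRootSqSum

variable {R : Type*} [CommRing R]

/-- If `p` splits and `p(0) ≠ 0`, this is `p(0)²` times the sum of the squares of the reciprocals of
the roots of `p`, i.e. the value at `0` of `(D p)² - p D² p`. -/
def reciprocalRootSqSum (p : R[X]) : R :=
  p.coeff 1 ^ 2 - 2 * p.coeff 0 * p.coeff 2

theorem reciprocalRootSqSum_mul (p q : R[X]) :
    reciprocalRootSqSum (p * q) =
      p.coeff 0 ^ 2 * reciprocalRootSqSum q + q.coeff 0 ^ 2 * reciprocalRootSqSum p := by
  simp only [reciprocalRootSqSum, coeff_mul,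
    Finset.Nat.sum_antidiagonal_eq_sum_range_succ_mk, Finset.sum_range_succ, Finset.sum_range_zero]
  ring

variable [LinearOrder R] [IsStrictOrderedRing R]

theorem reciprocalRootSqSum_nonneg {p : R[X]} (hp : p.Splits) : 0 ≤ reciprocalRootSqSum p := by
  induction hp using Submonoid.closure_induction with
  | mem f hf =>
    rcases hf with ⟨c, rfl⟩ | ⟨c, rfl⟩
    · simp [reciprocalRootSqSum, coeff_C]
    · simp [reciprocalRootSqSum, coeff_X, coeff_C]
  | one => simp [reciprocalRootSqSum, coeff_one]
  | mul f g _ _ hf hg =>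
    rw [reciprocalRootSqSum_mul]
    positivity

theorem reciprocalRootSqSum_pos {p : R[X]} (hp : p.Splits) (hp₀ : p.coeff 0 ≠ 0)
    (hdeg : p.natDegree ≠ 0) : 0 < reciprocalRootSqSum p := by
  obtain ⟨r, hr⟩ := hp.exists_eval_eq_zero (degree_ne_of_natDegree_ne hdeg)
  obtain ⟨q, rfl⟩ := dvd_iff_isRoot.2 hr
  have hq : 0 ≤ reciprocalRootSqSum q := reciprocalRootSqSum_nonneg (splits_X_sub_C_mul_iff.1 hp)
  have hq₀ : q.coeff 0 ≠ 0 := right_ne_zero_of_mul (mul_coeff_zero (X - C r) q ▸ hp₀)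
  have linear : reciprocalRootSqSum (X - C r) = 1 := by
    simp [reciprocalRootSqSum, coeff_X, coeff_C]
  rw [reciprocalRootSqSum_mul, linear]
  positivity

end ReciprocalRootSqSum

/-- The `n`-th Jensen polynomial of `γ`: the image of `(1 + X) ^ n` under the operator which
multiplies the `k`-th monomial by `γ k`. -/
noncomputable def jensenPolynomial {R : Type*} [Semiring R] (γ : ℕ → R) (n : ℕ) : R[X] :=
  ∑ k ∈ Finset.range (n + 1), C (γ k * n.choose k) * X ^ k

theorem coeff_jensenPolynomial {R : Type*} [Semiring R] (γ : ℕ → R) (n k : ℕ) :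
    (jensenPolynomial γ n).coeff k = γ k * n.choose k := by
  simp only [jensenPolynomial, finsetSum_coeff, coeff_C_mul_X_pow, Finset.sum_ite_eq,
    Finset.mem_range, ite_eq_left_iff, not_lt]
  intro hk
  rw [Nat.choose_eq_zero_of_lt hk, Nat.cast_zero, mul_zero]

section ClassicalMultiplierSequence

variable {γ : ℕ → ℝ}

theorem IsMultiplierSeqFor.splits_jensenPolynomial
    (h : IsMultiplierSeqFor (fun k => X ^ k) γ) (n : ℕ) : (jensenPolynomial γ n).Splits := by
  have binomial : ∑ k ∈ Finset.range (n + 1), C (n.choose k : ℝ) * X ^ k = (X + C 1) ^ n := by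
    rw [add_pow]
    exact Finset.sum_congr rfl fun k _ => by simp [mul_comm]
  refine hyperbolic_iff_splits.1 (h (n + 1) (fun k => n.choose k) ?_)
  rw [binomial, hyperbolic_iff_splits]
  exact (Splits.X_add_C 1).pow n

theorem IsMultiplierSeqFor.shift (h : IsMultiplierSeqFor (fun k => X ^ k) γ) (i : ℕ) :
    IsMultiplierSeqFor (fun k => X ^ k) fun k => γ (i + k) := by
  have factor (n : ℕ) (c : ℕ → ℝ) (hc : ∀ k < i, c k = 0) :
      ∑ k ∈ Finset.range (i + n), C (c k) * X ^ k =
        X ^ i * ∑ k ∈ Finset.range n, C (c (i + k)) * X ^ k := by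
    rw [Finset.sum_range_add, Finset.sum_eq_zero, zero_add, Finset.mul_sum]
    · exact Finset.sum_congr rfl fun k _ => by ring
    · intro k hk
      rw [hc k (Finset.mem_range.1 hk), C_0, zero_mul]
  intro n a ha
  have key := h (i + n) fun k => if k < i then 0 else a (k - i)
  rw [factor n _ (by grind), factor n _ (by grind)] at key
  simp only [hyperbolic_iff_splits, add_tsub_cancel_left, Nat.not_lt.2 (Nat.le_add_right i _),
    if_false, splits_mul_iff_right (pow_ne_zero i X_ne_zero) (Splits.X_pow i)] at key
  rw [hyperbolic_iff_splits] at ha ⊢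
  exact key ha

theorem IsMultiplierSeqFor.mul_le_sq (h : IsMultiplierSeqFor (fun k => X ^ k) γ) (i : ℕ) :
    γ i * γ (i + 2) ≤ γ (i + 1) ^ 2 := by
  rcases eq_or_ne (γ (i + 2)) 0 with h₂ | h₂
  · rw [h₂, mul_zero]
    positivity
  have hsplits := (h.shift i).splits_jensenPolynomial 2
  have hdeg : (jensenPolynomial (fun k => γ (i + k)) 2).degree ≠ 0 := fun h₀ =>
    h₂ <| by
      simpa [coeff_jensenPolynomial] using
        coeff_eq_zero_of_degree_lt (h₀.trans_lt (Nat.cast_pos.2 two_pos))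
  obtain ⟨x, hx⟩ := hsplits.exists_eval_eq_zero hdeg
  have quadratic : γ (i + 2) * (x * x) + 2 * γ (i + 1) * x + γ i = 0 := by
    rw [← hx]
    simp only [jensenPolynomial, Finset.sum_range_succ, Finset.sum_range_zero,
      Nat.choose_zero_right, Nat.choose_succ_self_right, Nat.choose_self, eval_add, eval_mul,
      eval_C, eval_pow, eval_X, add_zero, zero_add, one_add_one_eq_two]
    push_cast
    ring
  have hdiscrim := discrim_eq_sq_of_quadratic_eq_zero quadratic
  rw [discrim] at hdiscrim
  linear_combination (1 / 4 : ℝ) * sq_nonneg (2 * γ (i + 2) * x + 2 * γ (i + 1)) - 1 / 4 * hdiscrim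

theorem IsMultiplierSeqFor.eq_zero_of_lt (h : IsMultiplierSeqFor (fun k => X ^ k) γ)
    (hpos : ∀ k, 0 ≤ γ k) {i j : ℕ} (hi : γ i ≠ 0) (hi' : γ (i + 1) = 0) (hij : i < j) :
    γ j = 0 := by
  obtain ⟨m, rfl⟩ := Nat.exists_eq_add_of_lt hij
  set J := jensenPolynomial (fun k => γ (i + k)) (m + 1) with hJ
  have hJ₀ : J.coeff 0 ≠ 0 := by simpa [hJ, coeff_jensenPolynomial]
  have nonpos : reciprocalRootSqSum J ≤ 0 := by
    have hi₀ := hpos i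
    have hi₂ := hpos (i + 2)
    simp only [reciprocalRootSqSum, hJ, coeff_jensenPolynomial, hi', add_zero, zero_mul, sub_nonpos,
      zero_pow two_ne_zero]
    positivity
  have hdeg : J.natDegree = 0 := by
    by_contra hne
    exact (reciprocalRootSqSum_pos ((h.shift i).splits_jensenPolynomial _) hJ₀ hne).not_ge nonpos
  have htop := coeff_eq_zero_of_natDegree_lt (hdeg.trans_lt (Nat.add_one_pos m))
  simpa only [hJ, coeff_jensenPolynomial, Nat.choose_self, Nat.cast_one, mul_one, add_assoc]
    using htop

theorem IsMultiplierSeqFor.ordConnected_support (h : IsMultiplierSeqFor (fun k => X ^ k) γ)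
    (hpos : ∀ k, 0 ≤ γ k) : (Function.support γ).OrdConnected := by
  refine ⟨fun i hi j hj n hn => ?_⟩
  obtain ⟨hin, hnj⟩ := hn
  induction n, hin using Nat.le_induction with
  | base => exact hi
  | succ n _ ih => exact fun hn => hj (h.eq_zero_of_lt hpos (ih (by omega)) hn hnj)

end ClassicalMultiplierSequence

/-! ### Symmetric three-term recurrences -/

/-- The polynomials `q n` satisfy a symmetric three-term recurrence with positive coefficients. By
Favard's theorem these are, up to normalization, the orthogonal polynomials of the symmetric
measures on `ℝ`. -/
structure SymmetricRecurrence (q : ℕ → ℝ[X]) (a b : ℕ → ℝ) : Prop where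
  a_pos : ∀ n, 0 < a n
  b_pos : ∀ n, 0 < b n
  zero : q 0 = 1
  X_mul_zero : X * q 0 = C (a 0) * q 1
  X_mul_succ : ∀ n, X * q (n + 1) = C (a (n + 1)) * q (n + 2) + C (b n) * q n

/-- The polynomials `ρ n` with `q n (y i) = i ^ n * ρ n y`, which describe the family `q` of
`SymmetricRecurrence q a b` on the imaginary axis. -/
noncomputable def imagAxis (a b : ℕ → ℝ) : ℕ → ℝ[X]
  | 0 => 1
  | 1 => C (a 0)⁻¹ * X
  | n + 2 => C (a (n + 1))⁻¹ * (X * imagAxis a b (n + 1) + C (b n) * imagAxis a b n)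

namespace SymmetricRecurrence

variable {q : ℕ → ℝ[X]} {a b : ℕ → ℝ} (hq : SymmetricRecurrence q a b)
include hq

theorem degree_eq (n : ℕ) : (q n).degree = n := by
  induction n using Nat.twoStepInduction with
  | zero => simp [hq.zero]
  | one =>
    have hdeg := congrArg degree hq.X_mul_zero
    rw [degree_C_mul (hq.a_pos 0).ne'] at hdeg
    simp [← hdeg, hq.zero]
  | more n ih ih' =>
    have hlt : (C (b n) * q n).degree < (X * q (n + 1)).degree := by
      rw [degree_C_mul (hq.b_pos n).ne', X_mul, degree_mul_X, ih, ih']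
      exact_mod_cast (by omega : n < n + 1 + 1)
    have hdeg := degree_sub_eq_left_of_degree_lt hlt
    rw [hq.X_mul_succ, add_sub_cancel_right, degree_C_mul (hq.a_pos _).ne', ← hq.X_mul_succ,
      X_mul, degree_mul_X, ih'] at hdeg
    rw [hdeg]
    norm_cast

/-- The family `q` as a simple set. -/
def toSequence : Polynomial.Sequence ℝ := ⟨q, hq.degree_eq⟩

theorem diagonalMap_toSequence_apply (γ : ℕ → ℝ) (k : ℕ) :
    diagonalMap hq.toSequence γ (q k) = γ k • q k :=
  diagonalMap_apply hq.toSequence γ k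

/-- The recursive step of the Christoffel–Darboux formula. -/
theorem mul_im_mul_conj (n : ℕ) (z : ℂ) :
    a (n + 1) * (aeval z (q (n + 2)) * conj (aeval z (q (n + 1)))).im =
      z.im * Complex.normSq (aeval z (q (n + 1))) +
        b n * (aeval z (q (n + 1)) * conj (aeval z (q n))).im := by
  have hrec := congrArg (fun w => (w * conj (aeval z (q (n + 1)))).im)
    (congrArg (aeval z) (hq.X_mul_succ n))
  simp only [map_mul, map_add, aeval_X, aeval_C, Complex.coe_algebraMap, Complex.mul_im,
    Complex.mul_re, Complex.add_re, Complex.add_im, Complex.conj_re, Complex.conj_im,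
    Complex.ofReal_re, Complex.ofReal_im, Complex.normSq_apply] at hrec ⊢
  linear_combination -hrec

theorem im_mul_conj_pos {z : ℂ} (hz : z.im ≠ 0) (n : ℕ) :
    0 < z.im * (aeval z (q (n + 1)) * conj (aeval z (q n))).im := by
  have hsq : 0 < z.im ^ 2 := sq_pos_of_ne_zero hz
  induction n with
  | zero =>
    have hrec := congrArg (fun p => (aeval z p).im) hq.X_mul_zero
    simp only [hq.zero, mul_one, aeval_X, map_mul, aeval_C, Complex.coe_algebraMap,
      Complex.im_ofReal_mul] at hrec
    simp only [hq.zero, map_one, mul_one]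
    refine pos_of_mul_pos_right ?_ (hq.a_pos 0).le
    linear_combination hsq + z.im * hrec
  | succ n ih =>
    have hb := mul_pos (hq.b_pos n) ih
    have hnormSq := mul_nonneg hsq.le (Complex.normSq_nonneg (aeval z (q (n + 1))))
    refine pos_of_mul_pos_right ?_ (hq.a_pos (n + 1)).le
    linear_combination hb + hnormSq - z.im * hq.mul_im_mul_conj n z

theorem splits (n : ℕ) : (q n).Splits :=
  splits_of_forall_aeval_ne_zero fun z hz h₀ =>
    (hq.im_mul_conj_pos hz n).ne' (by rw [h₀, map_zero, mul_zero, Complex.zero_im, mul_zero])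

theorem mul_eval_imagAxis (n : ℕ) (y : ℝ) :
    a (n + 1) * (imagAxis a b (n + 2)).eval y =
      y * (imagAxis a b (n + 1)).eval y + b n * (imagAxis a b n).eval y := by
  have ha := (hq.a_pos (n + 1)).ne'
  simp [imagAxis, ha]

theorem aeval_mul_I (n : ℕ) (y : ℝ) :
    aeval (y * Complex.I) (q n) = Complex.I ^ n * (imagAxis a b n).eval y := by
  induction n using Nat.twoStepInduction with
  | zero => simp [hq.zero, imagAxis]
  | one =>
    have ha : (a 0 : ℂ) ≠ 0 := Complex.ofReal_ne_zero.2 (hq.a_pos 0).ne'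
    have hrec := congrArg (aeval (y * Complex.I)) hq.X_mul_zero
    simp only [hq.zero, map_mul, map_one, aeval_X, aeval_C, Complex.coe_algebraMap] at hrec
    refine mul_left_cancel₀ ha (hrec.symm.trans ?_)
    simp only [imagAxis, eval_mul, eval_C, eval_X, Complex.ofReal_mul, Complex.ofReal_inv]
    field_simp
  | more n ih ih' =>
    have ha : (a (n + 1) : ℂ) ≠ 0 := Complex.ofReal_ne_zero.2 (hq.a_pos _).ne'
    have hrec := congrArg (aeval (y * Complex.I)) (hq.X_mul_succ n)
    have hρ := congrArg Complex.ofReal (hq.mul_eval_imagAxis n y)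
    simp only [map_mul, map_add, aeval_X, aeval_C, Complex.coe_algebraMap, ih, ih'] at hrec
    push_cast at hρ
    refine mul_left_cancel₀ ha ?_
    linear_combination -hrec - Complex.I ^ (n + 2) * hρ -
      Complex.I ^ n * b n * ((imagAxis a b n).eval y : ℝ) * Complex.I_sq

theorem eval_imagAxis_pos (n : ℕ) {y : ℝ} (hy : 0 < y) : 0 < (imagAxis a b n).eval y := by
  induction n using Nat.twoStepInduction with
  | zero => simp [imagAxis]
  | one => simp [imagAxis, hq.a_pos 0, hy]
  | more n ih ih' =>
    have ha := hq.a_pos (n + 1)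
    have hb := hq.b_pos n
    refine pos_of_mul_pos_right (a := a (n + 1)) ?_ ha.le
    rw [hq.mul_eval_imagAxis]
    positivity

theorem eval_zero_imagAxis_pos (k : ℕ) : 0 < (imagAxis a b (2 * k)).eval 0 := by
  induction k with
  | zero => simp [imagAxis]
  | succ k ih =>
    refine pos_of_mul_pos_right (a := a (2 * k + 1)) ?_ (hq.a_pos _).le
    rw [Nat.mul_succ, hq.mul_eval_imagAxis, zero_mul, zero_add]
    exact mul_pos (hq.b_pos _) ih

theorem mul_eval_imagAxis_le (n : ℕ) {y : ℝ} (hy : 0 < y) :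
    y * (imagAxis a b n).eval y ≤ a n * (imagAxis a b (n + 1)).eval y := by
  cases n with
  | zero => simp [imagAxis, (hq.a_pos 0).ne']
  | succ n =>
    rw [hq.mul_eval_imagAxis]
    exact le_add_of_nonneg_right (mul_pos (hq.b_pos n) (hq.eval_imagAxis_pos n hy)).le

theorem sq_mul_eval_imagAxis_le (n : ℕ) {y : ℝ} (hy : 0 < y) :
    y ^ 2 * (imagAxis a b n).eval y ≤ a n * a (n + 1) * (imagAxis a b (n + 2)).eval y := by
  calc y ^ 2 * (imagAxis a b n).eval y = y * (y * (imagAxis a b n).eval y) := by ring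
    _ ≤ y * (a n * (imagAxis a b (n + 1)).eval y) :=
      mul_le_mul_of_nonneg_left (hq.mul_eval_imagAxis_le n hy) hy.le
    _ = a n * (y * (imagAxis a b (n + 1)).eval y) := by ring
    _ ≤ a n * (a (n + 1) * (imagAxis a b (n + 2)).eval y) :=
      mul_le_mul_of_nonneg_left (hq.mul_eval_imagAxis_le (n + 1) hy) (hq.a_pos n).le
    _ = _ := by ring

theorem aeval_mul_I_add (n : ℕ) (α β y : ℝ) :
    aeval (y * Complex.I) (C α * q (n + 2) + C β * q n) = -Complex.I ^ n *
      ((α * (imagAxis a b (n + 2)).eval y - β * (imagAxis a b n).eval y : ℝ) : ℂ) := by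
  simp only [map_add, map_mul, aeval_C, Complex.coe_algebraMap, hq.aeval_mul_I, pow_add,
    Complex.I_sq]
  push_cast
  ring

/-- On the positive imaginary axis the polynomial is a power of `i` times the real function
`β ρ n - α ρ (n + 2)`, which is negative far out; were it positive at `y`, it would vanish
beyond `y`, whereas moving away from the real axis cannot decrease the modulus of a real-rooted
polynomial. -/
theorem mul_eval_imagAxis_le_of_splits {n : ℕ} {α β y : ℝ} (hα : 0 < α) (hy : 0 ≤ y)
    (h : (C α * q (n + 2) + C β * q n).Splits) :
    β * (imagAxis a b n).eval y ≤ α * (imagAxis a b (n + 2)).eval y := by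
  let g : ℝ → ℝ := fun t => α * (imagAxis a b (n + 2)).eval t - β * (imagAxis a b n).eval t
  suffices 0 ≤ g y from sub_nonneg.1 this
  by_contra! hgy
  obtain ⟨Y, hY, hyY, hgrowth⟩ : ∃ Y : ℝ, 0 < Y ∧ y ≤ Y ∧ β * (a n * a (n + 1)) / α ≤ Y ^ 2 :=
    ((eventually_gt_atTop 0).and <| (eventually_ge_atTop y).and <|
      (tendsto_pow_atTop two_ne_zero).eventually_ge_atTop _).exists
  have hgY : 0 ≤ g Y := by
    have haa := mul_pos (hq.a_pos n) (hq.a_pos (n + 1))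
    refine sub_nonneg.2 (le_of_mul_le_mul_left ?_ haa)
    calc a n * a (n + 1) * (β * (imagAxis a b n).eval Y)
        = β * (a n * a (n + 1)) * (imagAxis a b n).eval Y := by ring
      _ ≤ Y ^ 2 * α * (imagAxis a b n).eval Y :=
        mul_le_mul_of_nonneg_right ((div_le_iff₀ hα).1 hgrowth) (hq.eval_imagAxis_pos n hY).le
      _ = α * (Y ^ 2 * (imagAxis a b n).eval Y) := by ring
      _ ≤ α * (a n * a (n + 1) * (imagAxis a b (n + 2)).eval Y) :=
        mul_le_mul_of_nonneg_left (hq.sq_mul_eval_imagAxis_le n hY) hα.le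
      _ = a n * a (n + 1) * (α * (imagAxis a b (n + 2)).eval Y) := by ring
  have hg : Continuous g := by fun_prop
  obtain ⟨t, ⟨hyt, -⟩, hgt : g t = 0⟩ :=
    intermediate_value_Icc hyY hg.continuousOn ⟨hgy.le, hgY⟩
  have hnorm := norm_aeval_le_of_splits h (w := y * Complex.I) (z := t * Complex.I) (by simp)
    (by simpa using abs_le_abs_of_nonneg hy hyt)
  rw [hq.aeval_mul_I_add, hq.aeval_mul_I_add] at hnorm
  change ‖-Complex.I ^ n * (g y : ℂ)‖ ≤ ‖-Complex.I ^ n * (g t : ℂ)‖ at hnorm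
  simp [hgt, hgy.ne] at hnorm

section MultiplierSequence

variable {γ : ℕ → ℝ} (h : IsMultiplierSeqFor q γ)
include h

theorem splits_diagonalMap {p : ℝ[X]} (hp : p.Splits) :
    (diagonalMap hq.toSequence γ p).Splits :=
  IsMultiplierSeqFor.splits_diagonalMap (S := hq.toSequence) h hp

theorem isMultiplierSeqFor_X_pow : IsMultiplierSeqFor (fun k => X ^ k) γ :=
  IsMultiplierSeqFor.X_pow (S := hq.toSequence) h

/-- Apply the operator to `X * q (2 * k + 1)` and evaluate at the origin. -/
theorem apply_two_mul_le (k : ℕ) (hγ : 0 < γ (2 * k + 2)) : γ (2 * k) ≤ γ (2 * k + 2) := by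
  have image := hq.splits_diagonalMap h (Splits.X.mul (hq.splits (2 * k + 1)))
  simp only [hq.X_mul_succ, ← smul_eq_C_mul, map_add, map_smul, hq.diagonalMap_toSequence_apply,
    smul_smul] at image
  simp only [smul_eq_C_mul] at image
  have hle := hq.mul_eval_imagAxis_le_of_splits (mul_pos (hq.a_pos _) hγ) le_rfl image
  have hρ := mul_pos (hq.b_pos (2 * k)) (hq.eval_zero_imagAxis_pos k)
  have hrec := hq.mul_eval_imagAxis (2 * k) 0
  refine le_of_mul_le_mul_left ?_ hρ
  linear_combination hle + γ (2 * k + 2) * hrec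

omit h in
theorem exists_X_sq_mul (m : ℕ) : ∃ A σ τ : ℝ, 0 < σ ∧ 0 < τ ∧
    X ^ 2 * q (m + 2) = C A * q (m + 4) + C σ * q (m + 2) + C τ * q m := by
  have ha₁ := hq.a_pos (m + 1)
  have ha₂ := hq.a_pos (m + 2)
  have hb₀ := hq.b_pos m
  have hb₁ := hq.b_pos (m + 1)
  have hb₂ := hq.b_pos (m + 2)
  refine ⟨a (m + 2) * a (m + 3), a (m + 2) * b (m + 2) + b (m + 1) * a (m + 1), b (m + 1) * b m,
    by positivity, by positivity, ?_⟩
  simp only [C_mul, C_add]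
  linear_combination X * hq.X_mul_succ (m + 1) + C (a (m + 2)) * hq.X_mul_succ (m + 2) +
    C (b (m + 1)) * hq.X_mul_succ m

/-- Apply the operator to `(X ^ 2 - (σ - δ)) * q (m + 2)` and let `δ → 0`. -/
theorem apply_add_four_ne_zero {m : ℕ} (h₀ : 0 < γ m) (h₂ : 0 < γ (m + 2)) : γ (m + 4) ≠ 0 := by
  intro h₄
  obtain ⟨A, σ, τ, hσ, hτ, expansion⟩ := hq.exists_X_sq_mul m
  let c := τ * γ m * (imagAxis a b m).eval 1
  let d := γ (m + 2) * (imagAxis a b (m + 2)).eval 1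
  have hc : 0 < c := mul_pos (mul_pos hτ h₀) (hq.eval_imagAxis_pos m one_pos)
  have hd : 0 < d := mul_pos h₂ (hq.eval_imagAxis_pos (m + 2) one_pos)
  have bound {δ : ℝ} (hδ : 0 < δ) (hδσ : δ ≤ σ) : c ≤ δ * d := by
    let s := √(σ - δ)
    have shifted : (X - C s) * (X + C s) * q (m + 2) =
        A • q (m + 4) + δ • q (m + 2) + τ • q m := by
      have hs : C s * C s = C σ - C δ := by
        rw [← C_mul, ← C_sub, Real.mul_self_sqrt (sub_nonneg.2 hδσ)]
      simp only [smul_eq_C_mul]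
      linear_combination expansion - q (m + 2) * hs
    have image := hq.splits_diagonalMap h
      (((Splits.X_sub_C s).mul (Splits.X_add_C s)).mul (hq.splits (m + 2)))
    simp only [shifted, map_add, map_smul, hq.diagonalMap_toSequence_apply, h₄, zero_smul,
      smul_zero, zero_add, smul_smul] at image
    simp only [smul_eq_C_mul] at image
    exact (hq.mul_eval_imagAxis_le_of_splits (mul_pos hδ h₂) zero_le_one image).trans_eq
      (mul_assoc _ _ _)
  have hle := bound (lt_min hσ (by positivity : 0 < c / (2 * d))) (min_le_left _ _)
  have hlt : min σ (c / (2 * d)) * d < c :=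
    calc min σ (c / (2 * d)) * d ≤ c / (2 * d) * d := by
          gcongr
          exact min_le_right _ _
      _ = c / 2 := by field_simp
      _ < c := half_lt_self hc
  exact hle.not_gt hlt

theorem apply_succ_ne_zero (hsupp : ¬ ∃ n, ∀ k, k ≠ n → k ≠ n + 1 → γ k = 0) (hpos : ∀ k, 0 ≤ γ k)
    {i : ℕ} (hi : γ i ≠ 0) : γ (i + 1) ≠ 0 := by
  intro hi'
  have hcl := hq.isMultiplierSeqFor_X_pow h
  have hzero {j : ℕ} (hij : i < j) : γ j = 0 := hcl.eq_zero_of_lt hpos hi hi' hij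
  push Not at hsupp
  obtain ⟨j, hj, hj', hγj⟩ := hsupp (i - 1)
  have hji : j + 2 ≤ i := by
    have := mt hzero hγj
    omega
  obtain ⟨m, rfl⟩ := Nat.exists_eq_add_of_le' (le_of_add_le_right hji)
  have hm : γ m ≠ 0 := (hcl.ordConnected_support hpos).out hγj hi ⟨by omega, by omega⟩
  exact hq.apply_add_four_ne_zero h ((hpos m).lt_of_ne' hm) ((hpos _).lt_of_ne' hi)
    (hzero (by omega))

end MultiplierSequence

end SymmetricRecurrence

theorem stmt_8_general {q : ℕ → ℝ[X]} {a b : ℕ → ℝ} (hq : SymmetricRecurrence q a b) (γ : ℕ → ℝ)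
    (h : IsMultiplierSeqFor q γ) (hsupp : ¬ ∃ n, ∀ k, k ≠ n → k ≠ n + 1 → γ k = 0)
    (hpos : ∀ k, 0 ≤ γ k) : ∀ k, γ k ≤ γ (k + 1) := by
  intro k
  by_contra! hdrop
  have pos : ∀ j ≥ k, 0 < γ j := fun j hj => by
    induction j, hj using Nat.le_induction with
    | base => exact (hpos _).trans_lt hdrop
    | succ j _ ih => exact (hpos _).lt_of_ne' (hq.apply_succ_ne_zero h hsupp hpos ih.ne')
  have decreasing : ∀ j ≥ k, γ (j + 1) < γ j := fun j hj => by
    induction j, hj using Nat.le_induction with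
    | base => exact hdrop
    | succ j hj ih =>
      refine lt_of_mul_lt_mul_left ?_ (hpos j)
      calc γ j * γ (j + 2) ≤ γ (j + 1) ^ 2 := (hq.isMultiplierSeqFor_X_pow h).mul_le_sq j
        _ < γ j * γ (j + 1) := by
          rw [sq]
          exact mul_lt_mul_of_pos_right ih (pos _ (by omega))
  have := hq.apply_two_mul_le h k (pos _ (by omega))
  linarith [decreasing (2 * k) (by omega), decreasing (2 * k + 1) (by omega)]

/-! ### Legendre polynomials -/

theorem derivative_X_sq_sub_one_pow {R : Type*} [CommRing R] (n : ℕ) :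
    derivative ((X ^ 2 - 1 : R[X]) ^ (n + 1)) = (2 * (n + 1)) • ((X ^ 2 - 1) ^ n * X) := by
  simp only [derivative_pow, derivative_sub, derivative_X, derivative_one, sub_zero, mul_one,
    add_tsub_cancel_right, nsmul_eq_mul, C_add, C_1, map_natCast, Nat.cast_ofNat, C_ofNat,
    Nat.cast_mul, Nat.cast_add, Nat.cast_one]
  ring

theorem iterate_derivative_X_sq_sub_one_pow {R : Type*} [CommRing R] (n : ℕ) :
    derivative^[n + 2] ((X ^ 2 - 1 : R[X]) ^ (n + 2)) =
      (2 * (2 * n + 3) : R[X]) * X * derivative^[n + 1] ((X ^ 2 - 1) ^ (n + 1)) -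
        (4 * (n + 1) ^ 2 : R[X]) * derivative^[n] ((X ^ 2 - 1) ^ n) := by
  set w : R[X] := (X ^ 2 - 1) ^ (n + 1) with hw
  have lower : derivative^[n] (derivative w * X) =
      (2 * (n + 1) : R[X]) * (derivative^[n] w + derivative^[n] ((X ^ 2 - 1) ^ n)) := by
    have hdw : derivative w * X = (2 * (n + 1)) • (w + (X ^ 2 - 1) ^ n) := by
      rw [hw, derivative_X_sq_sub_one_pow, pow_succ, smul_mul_assoc]
      congr 1
      ring
    rw [hdw, iterate_derivative_smul, iterate_map_add, nsmul_eq_mul]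
    push_cast
    rfl
  have upper : derivative^[n + 2] ((X ^ 2 - 1 : R[X]) ^ (n + 2)) =
      (2 * (n + 2) : R[X]) * (derivative^[n + 1] w * X + (n + 1 : R[X]) * derivative^[n] w) := by
    rw [Function.iterate_succ_apply, derivative_X_sq_sub_one_pow, iterate_derivative_smul,
      iterate_derivative_mul_X, nsmul_eq_mul, nsmul_eq_mul]
    push_cast
    ring
  rw [iterate_derivative_derivative_mul_X, nsmul_eq_mul] at lower
  rw [upper]
  linear_combination -(2 * (n + 1) : R[X]) * lower

theorem X_mul_legendre_succ (n : ℕ) :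
    X * legendre (n + 1) = C ((n + 2) / (2 * n + 3) : ℝ) * legendre (n + 2) +
      C ((n + 1) / (2 * n + 3) : ℝ) * legendre n := by
  let c (n : ℕ) : ℝ := 1 / (2 ^ n * n.factorial)
  have hfact : (n.factorial : ℝ) ≠ 0 := Nat.cast_ne_zero.2 n.factorial_ne_zero
  have hc₁ : c (n + 1) = (n + 2) / (2 * n + 3) * c (n + 2) * (2 * (2 * n + 3)) := by
    simp only [c, Nat.factorial_succ, pow_succ]
    push_cast
    field_simp
    ring
  have hc₀ : (n + 1) / (2 * n + 3) * c n =
      (n + 2) / (2 * n + 3) * c (n + 2) * (4 * (n + 1) ^ 2) := by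
    simp only [c, Nat.factorial_succ, pow_succ]
    push_cast
    field_simp
    ring
  have hC₁ := congrArg (C (R := ℝ)) hc₁
  have hC₀ := congrArg (C (R := ℝ)) hc₀
  simp only [C_mul, C_add, C_pow, C_ofNat, C_1, map_natCast] at hC₁ hC₀
  change X * (C (c (n + 1)) * _) = C _ * (C (c (n + 2)) * _) + C _ * (C (c n) * _)
  rw [iterate_derivative_X_sq_sub_one_pow]
  linear_combination X * derivative^[n + 1] ((X ^ 2 - 1 : ℝ[X]) ^ (n + 1)) * hC₁ -
    derivative^[n] ((X ^ 2 - 1 : ℝ[X]) ^ n) * hC₀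

theorem symmetricRecurrence_legendre : SymmetricRecurrence legendre
    (fun n => (n + 1) / (2 * n + 1)) (fun n => (n + 1) / (2 * n + 3)) where
  a_pos n := by positivity
  b_pos n := by positivity
  zero := by simp [legendre]
  X_mul_zero := by simp [legendre, one_add_one_eq_two, ← mul_assoc, ← C_mul]
  X_mul_succ n := by
    convert X_mul_legendre_succ n using 4
    push_cast
    ring

theorem stmt_8 (γ : ℕ → ℝ) (h : IsLegendreMS γ) (hnt : ¬ IsTrivialSeq γ)
    (hpos : ∀ k, 0 ≤ γ k) : ∀ k, γ k ≤ γ (k + 1) :=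
  stmt_8_general symmetricRecurrence_legendre γ h (fun hsupp => hnt (Or.inr hsupp)) hpos
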